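/- arXiv:0705.1182 — 2 statements merged into one kernel-verified Lean document; each statement's English description precedes it below -/
import Mathlib

section
/- Let A be an inseparable C*-algebra, B a separable C*-subalgebra of A, and g a pure state of A. Then there exists a separable C*-subalgebra C of A with B ⊆ C such that the restriction g|_C is a pure state of C. -/
open scoped ComplexOrder
noncomputable section

variable {A : Type*} [NormedRing A] [StarRing A] [CStarRing A] [NormedAlgebra ℂ A]
  [CompleteSpace A] [StarModule ℂ A]

/-- A state on a unital C*-algebra: a positive linear functional sending 1 to 1. -/
def IsState {A : Type*} [Ring A] [StarRing A] [Algebra ℂ A] (g : A →ₗ[ℂ] ℂ) : Prop :=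
  g 1 = 1 ∧ ∀ a : A, 0 ≤ g (star a * a)

/-- A pure state: a state that is an extreme point of the state space. -/
def IsPureState {A : Type*} [Ring A] [StarRing A] [Algebra ℂ A] (g : A →ₗ[ℂ] ℂ) : Prop :=
  IsState g ∧ ∀ g₁ g₂ : A →ₗ[ℂ] ℂ, IsState g₁ → IsState g₂ →
    g = (2:ℂ)⁻¹ • g₁ + (2:ℂ)⁻¹ • g₂ → g₁ = g₂

/-- The inclusion of a star subalgebra as a linear map. -/
def inclL (B : StarSubalgebra ℂ A) : B →ₗ[ℂ] A where
  toFun := (↑)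
  map_add' _ _ := rfl
  map_smul' _ _ := rfl


set_option linter.unusedSectionVars false

section Helpers

variable {R : Type*} [Ring R] [StarRing R] [Algebra ℂ R] [StarModule ℂ R]

/-- Finite sum of squares attached to a list. -/
def sqSum {R : Type*} [Ring R] [StarRing R] (l : List R) : R :=
  (l.map fun x => star x * x).sum

lemma sqSum_append (l m : List R) : sqSum (l ++ m) = sqSum l + sqSum m := by
  simp [sqSum]

lemma sqSum_smul (c : ℝ) (hc : 0 ≤ c) (l : List R) :
    sqSum (l.map fun x => ((Real.sqrt c : ℝ) : ℂ) • x) = (c : ℂ) • sqSum l := by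
  induction l with
  | nil => simp [sqSum]
  | cons x l ih =>
    simp only [sqSum, List.map_cons, List.sum_cons, smul_add] at ih ⊢
    rw [ih]
    congr 1
    rw [star_smul, smul_mul_smul_comm]
    congr 1
    simp only [RCLike.star_def, Complex.conj_ofReal]
    exact_mod_cast Real.mul_self_sqrt hc

lemma IsState.sqSum_nonneg {g : R →ₗ[ℂ] ℂ} (hg : IsState g) (l : List R) :
    0 ≤ g (sqSum l) := by
  induction l with
  | nil => simp [sqSum]
  | cons x l ih =>
    simp only [sqSum, List.map_cons, List.sum_cons, map_add] at ih ⊢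
    exact add_nonneg (hg.2 x) ih

lemma IsState.re_star {g : R →ₗ[ℂ] ℂ} (hg : IsState g) (a : R) :
    (g (star a)).re = (g a).re := by
  have h1 := (Complex.nonneg_iff.1 (hg.2 (Complex.I • a + 1))).2
  have h2 := (Complex.nonneg_iff.1 (hg.2 a)).2
  have h3 : star (Complex.I • a + 1) * (Complex.I • a + 1)
      = star a * a + Complex.I • a - Complex.I • star a + 1 := by
    simp only [star_add, star_smul, star_one, add_mul, mul_add, smul_mul_smul_comm]
    simp
    abel
  rw [h3] at h1
  simp [hg.1, ← h2] at h1
  linarith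

/-- Witnessed upper bounds. -/
def Wit (g : R →ₗ[ℂ] ℂ) (a : R) (r : ℝ) : Prop :=
  ∃ (l m : List R) (t : ℝ), sqSum l + (t : ℂ) • (1 : R) - (a + star a) = sqSum m ∧
    r = 2 * (g (sqSum l)).re + t

lemma Wit.add {g : R →ₗ[ℂ] ℂ} {a b : R} {r s : ℝ} (h : Wit g a r) (h' : Wit g b s) :
    Wit g (a + b) (r + s) := by
  obtain ⟨l, m, t, h1, rfl⟩ := h
  obtain ⟨l', m', t', h1', rfl⟩ := h'
  refine ⟨l ++ l', m ++ m', t + t', ?_, ?_⟩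
  · rw [sqSum_append, sqSum_append, ← h1, ← h1', star_add]
    push_cast
    rw [add_smul]
    abel
  · rw [sqSum_append, map_add, Complex.add_re]; ring

lemma Wit.smul {g : R →ₗ[ℂ] ℂ} {a : R} {r : ℝ} (h : Wit g a r) {c : ℝ} (hc : 0 ≤ c) :
    Wit g (c • a) (c * r) := by
  obtain ⟨l, m, t, h1, rfl⟩ := h
  refine ⟨l.map fun x => ((Real.sqrt c : ℝ) : ℂ) • x,
    m.map fun x => ((Real.sqrt c : ℝ) : ℂ) • x, c * t, ?_, ?_⟩
  · rw [sqSum_smul c hc, sqSum_smul c hc, ← h1, ← Complex.coe_smul, star_smul]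
    simp only [RCLike.star_def, Complex.conj_ofReal, smul_sub, smul_add, smul_smul]
    push_cast
    rfl
  · rw [sqSum_smul c hc]
    simp
    ring

lemma Wit.le {g : R →ₗ[ℂ] ℂ} (hg : IsState g) {a : R} {r : ℝ} (h : Wit g a r) :
    2 * (g a).re ≤ r := by
  obtain ⟨l, m, t, h1, rfl⟩ := h
  have h2 := (Complex.nonneg_iff.1 (hg.sqSum_nonneg m)).1
  have h3 := (Complex.nonneg_iff.1 (hg.sqSum_nonneg l)).1
  rw [← h1] at h2
  simp [hg.1, hg.re_star] at h2
  linarith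

lemma Wit.exists (g : R →ₗ[ℂ] ℂ) (a : R) : ∃ r, Wit g a r := by
  refine ⟨_, [a], [a - 1], 1, ?_, rfl⟩
  simp [sqSum, sub_mul, mul_sub]
  abel

lemma exists_wit_lt {g : R →ₗ[ℂ] ℂ} (hg : IsPureState g) (a : R) {ε : ℝ} (hε : 0 < ε) :
    ∃ r, Wit g a r ∧ r < 2 * (g a).re + ε := by
  have hs := hg.1
  let p : R → ℝ := fun a => sInf {r | Wit g a r}
  have hbdd : ∀ a, BddBelow {r | Wit g a r} := fun a => ⟨2 * (g a).re, fun r hr => Wit.le hs hr⟩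
  have hp_le : ∀ {a r}, Wit g a r → p a ≤ r := fun {a r} h => csInf_le (hbdd a) h
  have hle_p : ∀ {a c}, (∀ r, Wit g a r → c ≤ r) → c ≤ p a := fun {a c} h =>
    le_csInf (Wit.exists g a) h
  have hadd : ∀ x y, p (x + y) ≤ p x + p y := by
    intro x y
    have : p (x + y) - p y ≤ p x := hle_p fun r hr => by
      have : p (x + y) - r ≤ p y := hle_p fun s hs => by
        linarith [hp_le (hr.add hs)]
      linarith
    linarith
  have hsm : ∀ c : ℝ, 0 < c → ∀ x, c * p x ≤ p (c • x) := by
    intro c hc x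
    refine hle_p fun r hr => ?_
    have h1 := hr.smul (inv_nonneg.2 hc.le)
    rw [smul_smul, inv_mul_cancel₀ hc.ne', one_smul] at h1
    have := mul_le_mul_of_nonneg_left (hp_le h1) hc.le
    rwa [mul_inv_cancel_left₀ hc.ne'] at this
  have hhom : ∀ c : ℝ, 0 < c → ∀ x, p (c • x) = c * p x := by
    intro c hc x
    refine le_antisymm ?_ (hsm c hc x)
    have h1 := hsm c⁻¹ (inv_pos.2 hc) (c • x)
    rw [smul_smul, inv_mul_cancel₀ hc.ne', one_smul] at h1
    have := mul_le_mul_of_nonneg_left h1 hc.le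
    rwa [mul_inv_cancel_left₀ hc.ne'] at this
  have hp0 : p 0 = 0 := by
    have := hhom 2 (by norm_num) 0
    rw [smul_zero] at this
    linarith
  have H0 : ∀ c : ℝ, c • a = 0 → (RingHom.id ℝ c) • p a = 0 := by
    intro c hc
    rcases eq_or_ne c 0 with rfl | h
    · simp
    · have : a = 0 := (smul_eq_zero.1 hc).resolve_left h
      simp [this, hp0]
  obtain ⟨f, hf1, hf2⟩ := exists_extension_of_le_sublinear
    (LinearPMap.mkSpanSingleton' a (p a) H0) p hhom hadd (by
      rintro ⟨x, hx⟩
      obtain ⟨c, rfl⟩ := Submodule.mem_span_singleton.1 hx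
      rw [LinearPMap.mkSpanSingleton'_apply]
      simp only [RingHom.id_apply, smul_eq_mul]
      rcases lt_trichotomy c 0 with h | rfl | h
      · have h1 := hhom (-c) (by linarith) a
        have h2 := hadd (c • a) ((-c) • a)
        rw [← add_smul, add_neg_cancel, zero_smul, hp0] at h2
        linarith
      · simp [hp0]
      · exact (hhom c h a).ge)
  have hfa : f a = p a := by
    have := hf1 ⟨a, Submodule.mem_span_singleton_self a⟩
    exact this.trans (LinearPMap.mkSpanSingleton'_apply_self a (p a) H0 _)
  -- properties of f
  have hfw : ∀ {a r}, Wit g a r → f a ≤ r := fun {a r} h => (hf2 a).trans (hp_le h)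
  have hskew : ∀ x : R, star x = -x → f x = 0 := by
    have key : ∀ x : R, star x = -x → f x ≤ 0 := fun x hx =>
      hfw ⟨[], [], 0, by simp [sqSum, hx], by simp [sqSum]⟩
    intro x hx
    refine le_antisymm (key x hx) ?_
    have := key (-x) (by rw [star_neg, hx])
    rw [map_neg] at this
    linarith
  have hf_one : f 1 = 2 := by
    have h1 : f 1 ≤ 2 := hfw ⟨[], [], 2, by
      simp only [sqSum, List.map_nil, List.sum_nil, star_one]
      norm_num [two_smul, Algebra.smul_def, map_ofNat (algebraMap ℂ R) 2], by simp [sqSum]⟩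
    have h2 : f (-1) ≤ -2 := hfw ⟨[], [], -2, by
      simp only [sqSum, List.map_nil, List.sum_nil, star_one, star_neg]
      norm_num [two_smul, Algebra.smul_def, map_ofNat (algebraMap ℂ R) 2], by simp [sqSum]⟩
    rw [map_neg] at h2
    linarith
  have hf_pos : ∀ x : R, 0 ≤ f (star x * x) := by
    intro x
    have h2 : f (-(star x * x)) ≤ 0 := hfw ⟨[], [x, x], 0, by simp [sqSum], by simp [sqSum]⟩
    rw [map_neg] at h2
    linarith
  have hf_le : ∀ x : R, f (star x * x) ≤ 4 * (g (star x * x)).re := by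
    intro x
    exact hfw ⟨[x, x], [], 0, by simp [sqSum], by simp [sqSum]; ring⟩
  -- complexify
  let G : R →ₗ[ℂ] ℂ := (2 : ℂ)⁻¹ • (Module.Dual.extendRCLike f : Module.Dual ℂ R)
  have hGre : ∀ x, (G x).re = f x / 2 := by
    intro x
    have := Module.Dual.re_extendRCLike_apply (𝕜 := ℂ) f x
    simp only [RCLike.re_eq_complex_re] at this
    simp [G, this]
    ring
  have hGim : ∀ x, (G x).im = - f (Complex.I • x) / 2 := by
    intro x
    have := Module.Dual.im_extendRCLike_apply (𝕜 := ℂ) f x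
    simp only [RCLike.im_eq_complex_im, RCLike.I_to_complex] at this
    simp [G, this]
    ring
  have hG : IsState G := by
    refine ⟨?_, fun x => ?_⟩
    · apply Complex.ext
      · rw [hGre, hf_one]; norm_num
      · rw [hGim, hskew _ (by simp)]; simp
    · rw [Complex.nonneg_iff]
      refine ⟨?_, ?_⟩
      · rw [hGre]; linarith [hf_pos x]
      · rw [hGim, hskew _ (by simp)]; simp
  have hK : IsState ((2 : ℂ) • g - G) := by
    refine ⟨?_, fun x => ?_⟩
    · simp [hs.1, hG.1]; norm_num
    · have h1 := Complex.nonneg_iff.1 (hs.2 x)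
      have h2 := Complex.nonneg_iff.1 (hG.2 x)
      rw [Complex.nonneg_iff]
      refine ⟨?_, ?_⟩
      · simp [hGre]; linarith [hf_le x]
      · simp [← h1.2, ← h2.2]
  have hEq := hg.2 G _ hG hK (by
    ext x; simp; ring)
  have hfin : f a = 2 * (g a).re := by
    have h1 := congrArg (fun F : R →ₗ[ℂ] ℂ => (F a).re) hEq
    simp [hGre] at h1
    linarith
  by_contra! hcon
  have : 2 * (g a).re + ε ≤ p a := hle_p hcon
  linarith

end Helpers

lemma IsState.continuous {R : Type*} [CStarAlgebra R] {g : R →ₗ[ℂ] ℂ} (hg : IsState g) :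
    Continuous g := by
  let _ := CStarAlgebra.spectralOrder R
  have := CStarAlgebra.spectralOrderedRing R
  let P : R →ₚ[ℂ] ℂ := PositiveLinearMap.mk₀ g (fun x hx => by
    obtain ⟨y, rfl⟩ := CStarAlgebra.nonneg_iff_eq_star_mul_self.1 hx
    exact hg.2 y)
  exact map_continuous P

/-- One step of the closing-off construction. -/
def stepSet {A : Type*} [NormedRing A] [StarRing A] (F : A → Set A) (S : Set A) : Set A :=
  S ∪ ((⋃ a ∈ S, F a) ∪ (star '' S ∪ (Set.image2 (· + ·) S S ∪ Set.image2 (· * ·) S S)))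

lemma exists_closed_countable {A : Type*} [NormedRing A] [StarRing A] (F : A → Set A)
    (hF : ∀ a, (F a).Countable) (S : Set A) (hS : S.Countable) :
    ∃ D : Set A, D.Countable ∧ S ⊆ D ∧ (∀ a ∈ D, F a ⊆ D) ∧ (∀ a ∈ D, star a ∈ D) ∧
      (∀ a ∈ D, ∀ b ∈ D, a + b ∈ D) ∧ (∀ a ∈ D, ∀ b ∈ D, a * b ∈ D) := by
  let T : ℕ → Set A := fun n => (stepSet F)^[n] S
  have hT : ∀ n, T (n + 1) = stepSet F (T n) := fun n => Function.iterate_succ_apply' _ _ _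
  have hmono : Monotone T := monotone_nat_of_le_succ fun n => by
    rw [hT]; exact Set.subset_union_left
  have hsub : ∀ n, stepSet F (T n) ⊆ ⋃ n, T n := fun n => by
    rw [← hT]; exact Set.subset_iUnion T (n + 1)
  refine ⟨⋃ n, T n, Set.countable_iUnion fun n => ?_, Set.subset_iUnion T 0, ?_, ?_, ?_, ?_⟩
  · induction n with
    | zero => exact hS
    | succ n ih =>
      rw [hT]
      exact ih.union ((ih.biUnion fun a _ => hF a).union ((ih.image _).union
        ((ih.image2 ih _).union (ih.image2 ih _))))
  · intro a ha x hx
    obtain ⟨n, hn⟩ := Set.mem_iUnion.1 ha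
    exact hsub n (Or.inr (Or.inl (Set.mem_biUnion hn hx)))
  · intro a ha
    obtain ⟨n, hn⟩ := Set.mem_iUnion.1 ha
    exact hsub n (Or.inr (Or.inr (Or.inl ⟨a, hn, rfl⟩)))
  · intro a ha b hb
    obtain ⟨n, hn⟩ := Set.mem_iUnion.1 ha
    obtain ⟨m, hm⟩ := Set.mem_iUnion.1 hb
    exact hsub (max n m) (Or.inr (Or.inr (Or.inr (Or.inl
      ⟨a, hmono (le_max_left n m) hn, b, hmono (le_max_right n m) hm, rfl⟩))))
  · intro a ha b hb
    obtain ⟨n, hn⟩ := Set.mem_iUnion.1 ha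
    obtain ⟨m, hm⟩ := Set.mem_iUnion.1 hb
    exact hsub (max n m) (Or.inr (Or.inr (Or.inr (Or.inr
      ⟨a, hmono (le_max_left n m) hn, b, hmono (le_max_right n m) hm, rfl⟩))))

lemma exists_wit_mem {g : A →ₗ[ℂ] ℂ} (hg : IsPureState g) (a : A) :
    ∃ F : Set A, F.Countable ∧ ∀ ε : ℝ, 0 < ε → ∃ (l m : List A) (t : ℝ),
      (∀ x ∈ l, x ∈ F) ∧ (∀ x ∈ m, x ∈ F) ∧
      sqSum l + (t : ℂ) • (1 : A) - (a + star a) = sqSum m ∧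
      2 * (g (sqSum l)).re + t < 2 * (g a).re + ε := by
  have h : ∀ n : ℕ, ∃ (l m : List A) (t : ℝ),
      sqSum l + (t : ℂ) • (1 : A) - (a + star a) = sqSum m ∧
      2 * (g (sqSum l)).re + t < 2 * (g a).re + 1 / ((n : ℝ) + 1) := by
    intro n
    obtain ⟨r, ⟨l, m, t, h1, rfl⟩, h2⟩ := exists_wit_lt hg a (ε := 1 / ((n : ℝ) + 1))
      (by positivity)
    exact ⟨l, m, t, h1, h2⟩
  choose l m t h1 h2 using h
  refine ⟨⋃ n, ({x | x ∈ l n} ∪ {x | x ∈ m n}), Set.countable_iUnion fun n =>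
    ((List.finite_toSet _).countable.union (List.finite_toSet _).countable), fun ε hε => ?_⟩
  obtain ⟨n, hn⟩ := exists_nat_one_div_lt hε
  refine ⟨l n, m n, t n, fun x hx => Set.mem_iUnion.2 ⟨n, Or.inl hx⟩,
    fun x hx => Set.mem_iUnion.2 ⟨n, Or.inr hx⟩, h1 n, ?_⟩
  linarith [h2 n]

lemma sqSum_coe (C : StarSubalgebra ℂ A) (l : List C) :
    ((sqSum l : C) : A) = sqSum (l.map fun x : C => (x : A)) := by
  induction l with
  | nil => simp [sqSum]
  | cons x l ih =>
    simp only [sqSum, List.map_cons, List.sum_cons] at ih ⊢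
    rw [← ih]; rfl


/-- If `B` is a separable C*-subalgebra of an inseparable C*-algebra `A` and `g` is a pure
state of `A`, then there is a separable C*-subalgebra `C ⊇ B` such that `g|_C` is pure. -/
theorem exists_separable_subalgebra_restriction_pure
    (hA : ¬ TopologicalSpace.SeparableSpace A)
    (B : StarSubalgebra ℂ A) (hBclosed : IsClosed (B : Set A))
    (hBsep : TopologicalSpace.SeparableSpace B)
    (g : A →ₗ[ℂ] ℂ) (hg : IsPureState g) :
    ∃ C : StarSubalgebra ℂ A, B ≤ C ∧ IsClosed (C : Set A) ∧
      TopologicalSpace.SeparableSpace C ∧ IsPureState (g.comp (inclL C)) := by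
  obtain ⟨S, hSc, hSd⟩ := TopologicalSpace.exists_countable_dense B
  obtain ⟨Q, hQc, hQd⟩ := TopologicalSpace.exists_countable_dense ℂ
  choose F hFc hF using fun a => exists_wit_mem hg a
  obtain ⟨D, hDc, hSD, hDF, hDstar, hDadd, hDmul⟩ := exists_closed_countable F hFc
    (((↑) : B → A) '' S ∪ (fun q : ℂ => algebraMap ℂ A q) '' Q)
    ((hSc.image _).union (hQc.image _))
  have halg : ∀ r : ℂ, algebraMap ℂ A r ∈ closure D := by
    intro r
    have h1 : r ∈ closure Q := hQd r
    exact map_mem_closure (continuous_algebraMap ℂ A) h1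
      (fun q hq => hSD (Or.inr ⟨q, hq, rfl⟩))
  let C : StarSubalgebra ℂ A :=
    { carrier := closure D
      mul_mem' := fun {a b} ha hb => map_mem_closure₂ continuous_mul ha hb hDmul
      add_mem' := fun {a b} ha hb => map_mem_closure₂ continuous_add ha hb hDadd
      algebraMap_mem' := halg
      star_mem' := fun {a} ha => map_mem_closure continuous_star ha hDstar }
  have hCcl : IsClosed (C : Set A) := isClosed_closure
  have hDC : ∀ x ∈ D, x ∈ C := fun x hx => subset_closure hx
  refine ⟨C, ?_, hCcl, ?_, ?_, ?_⟩
  · intro x hx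
    have h1 : (⟨x, hx⟩ : B) ∈ closure S := hSd _
    exact map_mem_closure continuous_subtype_val h1 (fun q hq => hSD (Or.inl ⟨q, hq, rfl⟩))
  · exact (hDc.isSeparable.closure).separableSpace
  · exact ⟨hg.1.1, fun a => hg.1.2 (a : A)⟩
  · intro g₁ g₂ h₁ h₂ heq
    let _ : CStarAlgebra A := { }
    have : IsClosed (C : Set A) := hCcl
    have hc₁ : Continuous g₁ := IsState.continuous (R := C) h₁
    have hc₂ : Continuous g₂ := IsState.continuous (R := C) h₂
    have hsum : ∀ x : C, 2 * (g x).re = (g₁ x).re + (g₂ x).re := by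
      intro x
      have := congrArg (fun F : C →ₗ[ℂ] ℂ => (F x).re) heq
      simp [inclL] at this
      linarith
    have key : ∀ k k' : C →ₗ[ℂ] ℂ, IsState k → IsState k' →
        (∀ x : C, 2 * (g x).re = (k x).re + (k' x).re) →
        ∀ d (hd : d ∈ D), (k ⟨d, hDC d hd⟩).re ≤ (g d).re := by
      intro k k' hk hk' hkk d hd
      refine le_of_forall_pos_le_add fun ε hε => ?_
      obtain ⟨l, m, t, hl, hm, h1, h2⟩ := hF d ε hε
      have lift : ∀ l : List A, (∀ x ∈ l, x ∈ F d) → ∃ l' : List C, l'.map (fun x : C => (x : A)) = l := by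
        intro l hl
        refine ⟨l.pmap (fun x hx => (⟨x, hx⟩ : C)) (fun x hx => hDC x (hDF d hd (hl x hx))), ?_⟩
        rw [List.map_pmap]; simp
      obtain ⟨l', rfl⟩ := lift l hl
      obtain ⟨m', rfl⟩ := lift m hm
      have h3 : sqSum l' + (t : ℂ) • (1 : C) - ((⟨d, hDC d hd⟩ : C) + star ⟨d, hDC d hd⟩)
          = sqSum m' := by
        apply Subtype.ext
        rw [sqSum_coe, ← h1, ← sqSum_coe]; rfl
      have h4 := (Complex.nonneg_iff.1 (hk.sqSum_nonneg m')).1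
      rw [← h3] at h4
      simp only [map_sub, map_add, map_smul, hk.1, Complex.sub_re, Complex.add_re, hk.re_star] at h4
      simp at h4
      have h5 := (Complex.nonneg_iff.1 (hk'.sqSum_nonneg l')).1
      have h6 := hkk (sqSum l')
      rw [sqSum_coe] at h6
      linarith
    have hD : ∀ d (hd : d ∈ D), (g₁ ⟨d, hDC d hd⟩).re = (g₂ ⟨d, hDC d hd⟩).re := by
      intro d hd
      have a1 := key g₁ g₂ h₁ h₂ hsum d hd
      have a2 := key g₂ g₁ h₂ h₁ (fun x => by rw [hsum x, add_comm]) d hd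
      have a3 := hsum ⟨d, hDC d hd⟩
      simp only at a3
      linarith
    have hdense : Dense {x : C | (x : A) ∈ D} := by
      intro x
      rw [closure_subtype]
      have hx : (x : A) ∈ closure D := x.2
      convert hx using 2
      ext y
      constructor
      · rintro ⟨z, hz, rfl⟩; exact hz
      · intro hy; exact ⟨⟨y, hDC y hy⟩, hy, rfl⟩
    have hre : ∀ x : C, (g₁ x).re = (g₂ x).re := by
      have := Continuous.ext_on hdense (Complex.continuous_re.comp hc₁)
        (Complex.continuous_re.comp hc₂) (fun x hx => hD x hx)
      exact fun x => congrFun this x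
    ext x
    apply Complex.ext (hre x)
    have := hre (Complex.I • x)
    simp at this
    exact this
end
end

section
/- Let A be a unital C*-algebra, B a unital C*-subalgebra, and suppose every pure state of B has a unique state extension to A. Then there is at most one conditional expectation from A onto B. -/
open scoped ComplexOrder
noncomputable section

variable {A : Type*} [NormedRing A] [StarRing A] [CStarRing A] [NormedAlgebra ℂ A]
  [CompleteSpace A] [StarModule ℂ A]

/-- A conditional expectation onto a subalgebra `B`: a unital positive contractive linear
projection of `A` onto `B`. -/
def IsCondExp (B : StarSubalgebra ℂ A) (E : A →L[ℂ] A) : Prop :=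
  (∀ a : A, E a ∈ B) ∧ (∀ b ∈ B, E b = b) ∧
    (∀ a : A, ∃ c : A, E (star a * a) = star c * c) ∧ ‖E‖ = 1

section helpers

variable {C : Type*} [CStarAlgebra C] [PartialOrder C] [StarOrderedRing C]

lemma IsState.nonneg {f : C →ₗ[ℂ] ℂ} (hf : IsState f) {y : C} (hy : 0 ≤ y) : 0 ≤ f y := by
  obtain ⟨d, rfl⟩ := CStarAlgebra.nonneg_iff_eq_star_mul_self.mp hy
  exact hf.2 d

lemma map_algebraMap_real (f : C →ₗ[ℂ] ℂ) (h1 : f 1 = 1) (r : ℝ) :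
    f (algebraMap ℝ C r) = (r : ℂ) := by
  have : algebraMap ℝ C r = (r : ℂ) • (1 : C) := by
    rw [Algebra.algebraMap_eq_smul_one]; simp
  rw [this, map_smul, h1]; simp

lemma IsState.selfAdjoint {f : C →ₗ[ℂ] ℂ} (hf : IsState f) {y : C} (hy : IsSelfAdjoint y) :
    (f y).im = 0 ∧ |(f y).re| ≤ ‖y‖ := by
  have h1 := hf.nonneg (sub_nonneg.mpr hy.le_algebraMap_norm_self)
  have h2 := hf.nonneg (sub_nonneg.mpr hy.neg_algebraMap_norm_le_self)
  rw [map_sub, map_algebraMap_real f hf.1, Complex.le_def] at h1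
  rw [map_sub, map_neg, map_algebraMap_real f hf.1, Complex.le_def] at h2
  simp at h1 h2
  exact ⟨h1.2, abs_le.mpr ⟨by linarith, by linarith⟩⟩

lemma IsState.norm_le {f : C →ₗ[ℂ] ℂ} (hf : IsState f) (x : C) : ‖f x‖ ≤ 2 * ‖x‖ := by
  have key : ∀ y : C, IsSelfAdjoint y → ‖f y‖ ≤ ‖y‖ := fun y hy => by
    obtain ⟨h1, h2⟩ := hf.selfAdjoint hy
    have : f y = ((f y).re : ℂ) := Complex.ext (by simp) (by simp [h1])
    rw [this, Complex.norm_real]; exact h2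
  have e := realPart_add_I_smul_imaginaryPart x
  calc ‖f x‖ = ‖f (realPart x : C) + Complex.I * f (imaginaryPart x : C)‖ := by
        conv_lhs => rw [← e]
        simp
    _ ≤ ‖f (realPart x : C)‖ + ‖f (imaginaryPart x : C)‖ := by
        refine (norm_add_le _ _).trans ?_
        simp
    _ ≤ ‖(realPart x : C)‖ + ‖(imaginaryPart x : C)‖ :=
        add_le_add (key _ (realPart x).2) (key _ (imaginaryPart x).2)
    _ ≤ ‖x‖ + ‖x‖ := add_le_add (realPart.norm_le x) (imaginaryPart.norm_le x)
    _ = 2 * ‖x‖ := by ring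

/-- The complex functional built from a real one through real and imaginary parts. -/
def cplx (f : C →L[ℝ] ℝ) : C →ₗ[ℂ] ℂ where
  toFun a := (f (realPart a : C) : ℂ) + Complex.I * (f (imaginaryPart a : C) : ℂ)
  map_add' a b := by simp; ring
  map_smul' z a := by
    simp only [realPart_smul, imaginaryPart_smul, AddSubgroupClass.coe_sub, AddMemClass.coe_add,
      selfAdjoint.val_smul, map_sub, map_add, map_smul, smul_eq_mul, RingHom.id_apply]
    apply Complex.ext <;> simp

lemma cplx_sa (f : C →L[ℝ] ℝ) {a : C} (ha : IsSelfAdjoint a) : cplx f a = (f a : ℂ) := by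
  simp [cplx, ha.coe_realPart, ha.imaginaryPart]

lemma nonneg_of_states {x : C} (hx : IsSelfAdjoint x)
    (h : ∀ f : C →ₗ[ℂ] ℂ, IsState f → f x = 0) : 0 ≤ x := by
  by_contra hneg
  have hconv : Convex ℝ {a : C | 0 ≤ a} := by
    intro a ha b hb s t hs ht _
    exact add_nonneg (smul_nonneg hs ha) (smul_nonneg ht hb)
  obtain ⟨f, u, hfx, hfu⟩ := geometric_hahn_banach_point_closed hconv
    (CStarAlgebra.isClosed_nonneg (A := C)) hneg
  have hu : u < 0 := by simpa using hfu 0 (le_refl (0 : C))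
  have hpos : ∀ b : C, 0 ≤ b → 0 ≤ f b := by
    intro b hb
    by_contra hlt
    push Not at hlt
    have := hfu ((u / f b) • b) (smul_nonneg (div_nonneg_of_nonpos hu.le hlt.le) hb)
    rw [map_smul, smul_eq_mul, div_mul_cancel₀ _ hlt.ne] at this
    exact lt_irrefl _ this
  have h1 : 0 < f 1 := by
    have := hpos _ (sub_nonneg.mpr hx.neg_algebraMap_norm_le_self)
    rw [Algebra.algebraMap_eq_smul_one, map_sub, map_neg, map_smul, smul_eq_mul] at this
    have h0 : 0 ≤ f 1 := hpos 1 zero_le_one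
    rcases h0.lt_or_eq with h0 | h0
    · exact h0
    · rw [← h0] at this; linarith
  have hst : IsState (((f 1 : ℝ) : ℂ)⁻¹ • cplx f) := by
    constructor
    · rw [LinearMap.smul_apply, cplx_sa f (IsSelfAdjoint.one C), smul_eq_mul, inv_mul_cancel₀]
      exact_mod_cast h1.ne'
    · intro a
      rw [LinearMap.smul_apply, cplx_sa f (IsSelfAdjoint.star_mul_self a), smul_eq_mul]
      have := mul_nonneg (inv_nonneg.mpr h1.le) (hpos _ (star_mul_self_nonneg a))
      exact_mod_cast this
  have := h _ hst
  rw [LinearMap.smul_apply, cplx_sa f hx, smul_eq_mul] at this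
  have h3 : f x = 0 := by
    rcases mul_eq_zero.mp this with h | h
    · exact absurd (by simpa using h) h1.ne'
    · exact_mod_cast h
  linarith

lemma eq_zero_of_states {x : C} (h : ∀ f : C →ₗ[ℂ] ℂ, IsState f → f x = 0) : x = 0 := by
  have key : ∀ y : C, IsSelfAdjoint y → (∀ f : C →ₗ[ℂ] ℂ, IsState f → f y = 0) → y = 0 := by
    intro y hy hf
    apply le_antisymm
    · exact neg_nonneg.mp (nonneg_of_states hy.neg fun f h => by rw [map_neg, hf f h, neg_zero])
    · exact nonneg_of_states hy hf
  have hsplit : ∀ f : C →ₗ[ℂ] ℂ, IsState f →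
      f (realPart x : C) = 0 ∧ f (imaginaryPart x : C) = 0 := by
    intro f hf
    have e := h f hf
    rw [← realPart_add_I_smul_imaginaryPart x, map_add, map_smul, smul_eq_mul] at e
    have a := (hf.selfAdjoint (realPart x).2).1
    have b := (hf.selfAdjoint (imaginaryPart x).2).1
    have e1 := congrArg Complex.re e
    have e2 := congrArg Complex.im e
    simp [a, b] at e1 e2
    exact ⟨Complex.ext e1 a, Complex.ext e2 b⟩
  rw [← realPart_add_I_smul_imaginaryPart x, key _ (realPart x).2 fun f hf => (hsplit f hf).1,
    key _ (imaginaryPart x).2 fun f hf => (hsplit f hf).2]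
  simp

/-- The state space in the weak dual. -/
def stateSet (C : Type*) [CStarAlgebra C] : Set (WeakDual ℂ C) :=
  {f | f 1 = 1 ∧ ∀ a : C, 0 ≤ f (star a * a)}

/-- The linear map underlying an element of the weak dual. -/
def wlin (f : WeakDual ℂ C) : C →ₗ[ℂ] ℂ := (WeakDual.toStrongDual f).toLinearMap

omit [PartialOrder C] [StarOrderedRing C] in
lemma wlin_apply (f : WeakDual ℂ C) (a : C) : wlin f a = f a := rfl

lemma isCompact_stateSet : IsCompact (stateSet C) := by
  refine (WeakDual.isCompact_closedBall (𝕜 := ℂ) (E := C) 0 2).of_isClosed_subset ?_ ?_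
  · have : stateSet C = {f : WeakDual ℂ C | f 1 = 1} ∩
        ⋂ a : C, {f : WeakDual ℂ C | 0 ≤ f (star a * a)} := by
      ext f; simp [stateSet]
    rw [this]
    refine (isClosed_eq (WeakDual.eval_continuous _) continuous_const).inter
      (isClosed_iInter fun a => isClosed_le continuous_const (WeakDual.eval_continuous _))
  · intro f hf
    have hs : IsState (wlin f) := hf
    simp only [Set.mem_preimage, Metric.mem_closedBall, dist_zero_right]
    exact ContinuousLinearMap.opNorm_le_bound _ (by norm_num) fun x => hs.norm_le x

omit [PartialOrder C] [StarOrderedRing C] in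
lemma convex_stateSet : Convex ℝ (stateSet C) := by
  intro f hf g hg s t hs ht hst
  have ev : ∀ a : C, (s • f + t • g) a = (s : ℂ) * f a + (t : ℂ) * g a := fun a => by
    change s • f a + t • g a = _
    simp
  constructor
  · rw [ev, hf.1, hg.1]; simp; exact_mod_cast hst
  · intro a
    rw [ev]
    exact add_nonneg (mul_nonneg (by exact_mod_cast hs) (hf.2 a))
      (mul_nonneg (by exact_mod_cast ht) (hg.2 a))

/-- A state as an element of the weak dual. -/
def IsState.toWeak {g : C →ₗ[ℂ] ℂ} (hg : IsState g) : WeakDual ℂ C :=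
  StrongDual.toWeakDual (g.mkContinuous 2 hg.norm_le)

lemma IsState.toWeak_apply {g : C →ₗ[ℂ] ℂ} (hg : IsState g) (a : C) : hg.toWeak a = g a := rfl

lemma isPure_of_extreme {f : WeakDual ℂ C} (hf : f ∈ (stateSet C).extremePoints ℝ) :
    IsPureState (wlin f) := by
  refine ⟨hf.1, fun g₁ g₂ h1 h2 he => ?_⟩
  have m1 : h1.toWeak ∈ stateSet C := h1
  have m2 : h2.toWeak ∈ stateSet C := h2
  have hseg : f ∈ openSegment ℝ h1.toWeak h2.toWeak := by
    refine ⟨1/2, 1/2, by norm_num, by norm_num, by norm_num, ?_⟩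
    refine DFunLike.ext _ _ fun a => ?_
    have := LinearMap.congr_fun he a
    rw [wlin_apply] at this
    rw [this]
    change (1/2 : ℝ) • g₁ a + (1/2 : ℝ) • g₂ a = _
    simp
  have := mem_extremePoints.mp hf
  obtain ⟨e1, e2⟩ := this.2 _ m1 _ m2 hseg
  ext a
  rw [← h1.toWeak_apply, ← h2.toWeak_apply, e1, e2]

lemma krein_weakDual {E : Type*} [NormedAddCommGroup E] [NormedSpace ℂ E] {s : Set (WeakDual ℂ E)}
    (hs : IsCompact s) (hc : Convex ℝ s) : closure (convexHull ℝ (s.extremePoints ℝ)) = s := by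
  have : IsScalarTower ℝ ℂ (WeakDual ℂ E) := ⟨fun r z g => DFunLike.ext _ _ fun a => by
    change (r • z) • g a = r • (z • g a)
    rw [smul_assoc]⟩
  have : ContinuousSMul ℝ (WeakDual ℂ E) := IsScalarTower.continuousSMul ℂ
  have : LocallyConvexSpace ℝ (WeakDual ℂ E) :=
    (WeakDual.withSeminorms ℂ E).toLocallyConvexSpace
  exact closure_convexHull_extremePoints hs hc

lemma eq_zero_of_pure {x : C} (h : ∀ f : C →ₗ[ℂ] ℂ, IsPureState f → f x = 0) : x = 0 := by
  apply eq_zero_of_states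
  intro f hf
  have hm : hf.toWeak ∈ stateSet C := hf
  rw [← krein_weakDual (isCompact_stateSet (C := C)) convex_stateSet] at hm
  have hsub : closure (convexHull ℝ ((stateSet C).extremePoints ℝ)) ⊆
      {g : WeakDual ℂ C | g x = 0} := by
    refine closure_minimal (convexHull_min ?_ ?_)
      (isClosed_eq (WeakDual.eval_continuous _) continuous_const)
    · intro g hg
      exact h _ (isPure_of_extreme hg)
    · intro g hg k hk s t _ _ _
      change s • g x + t • k x = 0
      rw [show g x = 0 from hg, show k x = 0 from hk]; simp
  exact hsub hm

end helpers

lemma main_aux {A : Type*} [CStarAlgebra A] [PartialOrder A] [StarOrderedRing A]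
    (B : StarSubalgebra ℂ A) 
    (hext : ∀ φ : B →ₗ[ℂ] ℂ, IsPureState φ →
      ∃! ψ : A →ₗ[ℂ] ℂ, IsState ψ ∧ ψ.comp (inclL B) = φ)
    (E₁ E₂ : A →L[ℂ] A) (h₁ : IsCondExp B E₁) (h₂ : IsCondExp B E₂) :
    E₁ = E₂ := by
  have hcl : IsClosed (B : Set A) := by
    have : (B : Set A) = {a | E₁ a = a} := by
      ext a
      exact ⟨fun h => h₁.2.1 a h, fun h => by
        have := h₁.1 a; rw [show E₁ a = a from h] at this; exact this⟩
    rw [this]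
    exact isClosed_eq E₁.continuous continuous_id
  let r : ∀ E : A →L[ℂ] A, IsCondExp B E → (A →ₗ[ℂ] B) := fun E h =>
    { toFun := fun a => ⟨E a, h.1 a⟩
      map_add' := fun a b => Subtype.ext (map_add E a b)
      map_smul' := fun z a => Subtype.ext (map_smul E z a) }
  have hr : ∀ (E) (h : IsCondExp B E) (φ : B →ₗ[ℂ] ℂ), IsState φ →
      IsState (φ.comp (r E h)) ∧ (φ.comp (r E h)).comp (inclL B) = φ := by
    intro E h φ hφ
    have hid : ∀ b : B, r E h b = b := fun b => Subtype.ext (h.2.1 b b.2)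
    refine ⟨⟨?_, fun a => ?_⟩, ?_⟩
    · rw [LinearMap.comp_apply, show r E h 1 = 1 from hid 1, hφ.1]
    · obtain ⟨c, hc⟩ := h.2.2.1 a
      have hm : star c * c ∈ B := hc ▸ h.1 _
      have hpos : 0 ≤ star c * c := star_mul_self_nonneg c
      have hd : cfc Real.sqrt (star c * c) ∈ B := cfc_mem (𝕜' := ℂ) Real.sqrt hm
      have hsa : IsSelfAdjoint (cfc Real.sqrt (star c * c)) := cfc_predicate _ _
      have hsq : cfc Real.sqrt (star c * c) * cfc Real.sqrt (star c * c) = star c * c := by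
        rw [← cfc_mul Real.sqrt Real.sqrt (star c * c)]
        conv_rhs => rw [← cfc_id ℝ (star c * c)]
        refine cfc_congr fun t ht => ?_
        exact Real.mul_self_sqrt (spectrum_nonneg_of_nonneg hpos ht)
      have : r E h (star a * a) = star (⟨_, hd⟩ : B) * ⟨_, hd⟩ := by
        apply Subtype.ext
        change E (star a * a) = star (cfc Real.sqrt (star c * c)) * cfc Real.sqrt (star c * c)
        rw [hsa.star_eq, hsq, hc]
      rw [LinearMap.comp_apply, this]
      exact hφ.2 _
    · ext b
      exact congrArg φ (hid b)
  ext a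
  let _ : PartialOrder B := CStarAlgebra.spectralOrder B
  have : StarOrderedRing B := CStarAlgebra.spectralOrderedRing B
  have hz : r E₁ h₁ a - r E₂ h₂ a = 0 := by
    apply eq_zero_of_pure
    intro φ hφ
    have := (hext φ hφ).unique (hr E₁ h₁ φ hφ.1) (hr E₂ h₂ φ hφ.1)
    rw [map_sub, sub_eq_zero]
    exact LinearMap.congr_fun this a
  exact congrArg Subtype.val (sub_eq_zero.mp hz)

/-- If every pure state of `B` extends uniquely to a state of `A`, then there is at most one
conditional expectation of `A` onto `B`. -/
theorem condExp_unique_of_unique_pure_state_extension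
    (B : StarSubalgebra ℂ A)
    (hext : ∀ φ : B →ₗ[ℂ] ℂ, IsPureState φ →
      ∃! ψ : A →ₗ[ℂ] ℂ, IsState ψ ∧ ψ.comp (inclL B) = φ)
    (E₁ E₂ : A →L[ℂ] A) (h₁ : IsCondExp B E₁) (h₂ : IsCondExp B E₂) :
    E₁ = E₂ := by
  let _ : CStarAlgebra A := {}
  let _ : PartialOrder A := CStarAlgebra.spectralOrder A
  have : StarOrderedRing A := CStarAlgebra.spectralOrderedRing A
  exact main_aux B hext E₁ E₂ h₁ h₂
end
end
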